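/- Let v(n) be a sequence tending to +∞ and for each n let E_n be a Borel subset of ℝ^n with liminf_{n→∞} ν_α^n(E_n) > 0 (respectively liminf_{n→∞} μ_α^n(E_n) > 0). (i) For α ∈ (0,2] and any sequence h_n ∈ ℝ^n, liminf_{n→∞} (1/v(n)) log ν_α^n( E_n + v(n)^{1/α} h_n ) ≥ − limsup_{n→∞} ‖h_n‖_{ℓ^α}^α. (ii) For α ∈ (0,1] and any sequence h_n ∈ ℝ₊^n, liminf_{n→∞} (1/v(n)) log μ_α^n( E_n + v(n)^{1/α} h_n ) ≥ − limsup_{n→∞} ‖h_n‖_{ℓ^α}^α. -/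

import Mathlib

open MeasureTheory Filter Topology Pointwise

noncomputable section

/-- The (unnormalized) measure on `ℝ` with density `exp (-|x|^α)`. -/
def nuKernel (α : ℝ) : Measure ℝ :=
  volume.withDensity fun x => ENNReal.ofReal (Real.exp (-|x| ^ α))

/-- The probability measure `ν_α` on `ℝ`. -/
def nuAlpha (α : ℝ) : Measure ℝ := (nuKernel α Set.univ)⁻¹ • nuKernel α

/-- The `n`-fold product measure `ν_α^n` on `ℝ^n`. -/
def nuPi (α : ℝ) (n : ℕ) : Measure (Fin n → ℝ) := Measure.pi fun _ => nuAlpha α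

/-- The (unnormalized) measure on `ℝ` with density `exp (-x^α) 1_{x ≥ 0}`. -/
def muKernel (α : ℝ) : Measure ℝ :=
  volume.withDensity fun x => if 0 ≤ x then ENNReal.ofReal (Real.exp (-x ^ α)) else 0

/-- The probability measure `μ_α` on `ℝ`. -/
def muAlpha (α : ℝ) : Measure ℝ := (muKernel α Set.univ)⁻¹ • muKernel α

/-- The `n`-fold product measure `μ_α^n` on `ℝ^n`. -/
def muPi (α : ℝ) (n : ℕ) : Measure (Fin n → ℝ) := Measure.pi fun _ => muAlpha α

/-- `‖h‖_{ℓ^α}^α = ∑ |h i|^α`. -/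
def lpNormPow (p : ℝ) {n : ℕ} (h : Fin n → ℝ) : ℝ := ∑ i, |h i| ^ p

/-- `log : ℝ≥0∞ → EReal`, with `log 0 = ⊥` and `log ⊤ = ⊤`. -/
def elog (x : ENNReal) : EReal :=
  if x = 0 then ⊥ else if x = ⊤ then ⊤ else ((Real.log x.toReal : ℝ) : EReal)

/-- A finite product of copies of a measure with integrable real density has the product density. -/
lemma pi_withDensity_ofReal {n : ℕ} {g : ℝ → ℝ} (hg0 : ∀ x, 0 ≤ g x) (hg : Integrable g) :
    Measure.pi (fun _ : Fin n => volume.withDensity fun x => ENNReal.ofReal (g x)) =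
      volume.withDensity fun x : Fin n → ℝ => ENNReal.ofReal (∏ i, g (x i)) := by
  have : IsFiniteMeasure (volume.withDensity fun x => ENNReal.ofReal (g x)) :=
    isFiniteMeasure_withDensity_ofReal hg.2
  refine Measure.pi_eq fun s hs => ?_
  rw [withDensity_apply _ (MeasurableSet.univ_pi hs), volume_pi, Measure.restrict_pi_pi,
    ← ofReal_integral_eq_lintegral_ofReal
      (Integrable.fintype_prod (f := fun _ => g) fun i => hg.restrict)
      (Eventually.of_forall fun x => Finset.prod_nonneg fun i _ => hg0 _),
    integral_fintype_prod_eq_prod (fun _ => g),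
    ENNReal.ofReal_prod_of_nonneg fun i _ => integral_nonneg hg0]
  refine Finset.prod_congr rfl fun i _ => ?_
  rw [withDensity_apply _ (hs i), ofReal_integral_eq_lintegral_ofReal hg.restrict
    (Eventually.of_forall hg0)]

/-- If translating by `H` costs at most a factor `exp (-K)` in the product density at every point
of `F`, then it costs at most that factor in the measure of `F`. -/
lemma ofReal_exp_mul_pi_le_pi_translate {n : ℕ} {g : ℝ → ℝ} (hg0 : ∀ x, 0 ≤ g x)
    (hg : Integrable g) (hgm : Measurable g) {F : Set (Fin n → ℝ)} (hF : MeasurableSet F)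
    (H : Fin n → ℝ) (K : ℝ)
    (hK : ∀ x ∈ F, Real.exp (-K) * ∏ i, g (x i) ≤ ∏ i, g (x i + H i)) :
    ENNReal.ofReal (Real.exp (-K)) *
        Measure.pi (fun _ : Fin n => volume.withDensity fun x => ENNReal.ofReal (g x)) F ≤
      Measure.pi (fun _ : Fin n => volume.withDensity fun x => ENNReal.ofReal (g x))
        ((fun x => x + H) '' F) := by
  have hemb : MeasurableEmbedding fun x : Fin n → ℝ => x + H := measurableEmbedding_addRight H
  have hmeas : Measurable fun x : Fin n → ℝ => ENNReal.ofReal (∏ i, g (x i)) := by fun_prop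
  rw [pi_withDensity_ofReal hg0 hg, withDensity_apply _ hF,
    withDensity_apply _ (hemb.measurableSet_image.2 hF),
    ← (measurePreserving_add_right volume H).setLIntegral_comp_emb hemb,
    ← lintegral_const_mul _ hmeas]
  refine setLIntegral_mono (hmeas.comp hemb.measurable) fun x hx => ?_
  rw [← ENNReal.ofReal_mul (Real.exp_nonneg _)]
  exact ENNReal.ofReal_le_ofReal (hK x hx)

/-- Normalizing a measure with density `k` amounts to normalizing `k`. -/
lemma inv_smul_withDensity_ofReal {k : ℝ → ℝ} (hk0 : ∀ x, 0 ≤ k x) (hk : Integrable k)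
    (hpos : 0 < ∫ x, k x) :
    ((volume.withDensity fun x => ENNReal.ofReal (k x)) Set.univ)⁻¹ •
        (volume.withDensity fun x => ENNReal.ofReal (k x)) =
      volume.withDensity fun x => ENNReal.ofReal ((∫ y, k y)⁻¹ * k x) := by
  have huniv : (volume.withDensity fun x => ENNReal.ofReal (k x)) Set.univ =
      ENNReal.ofReal (∫ x, k x) := by
    rw [withDensity_apply _ MeasurableSet.univ, Measure.restrict_univ,
      ofReal_integral_eq_lintegral_ofReal hk (Eventually.of_forall hk0)]
  rw [huniv, ← withDensity_smul' _ _ (by simpa using hpos)]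
  congr 1
  ext x
  rw [ENNReal.ofReal_mul (by positivity), ENNReal.ofReal_inv_of_pos hpos]
  rfl

lemma isProbabilityMeasure_withDensity_ofReal_normalized {k : ℝ → ℝ} (hk0 : ∀ x, 0 ≤ k x)
    (hk : Integrable k) (hpos : 0 < ∫ x, k x) :
    IsProbabilityMeasure (volume.withDensity fun x => ENNReal.ofReal ((∫ y, k y)⁻¹ * k x)) := by
  refine ⟨?_⟩
  rw [withDensity_apply _ MeasurableSet.univ, Measure.restrict_univ,
    ← ofReal_integral_eq_lintegral_ofReal (hk.const_mul _)
      (Eventually.of_forall fun x => mul_nonneg (inv_nonneg.2 hpos.le) (hk0 x)),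
    integral_const_mul, inv_mul_cancel₀ hpos.ne', ENNReal.ofReal_one]

/-- The translation bound for the normalized product measure, in terms of the unnormalized
density. -/
lemma ofReal_exp_mul_pi_normalized_le {n : ℕ} {k : ℝ → ℝ} (hk0 : ∀ x, 0 ≤ k x)
    (hk : Integrable k) (hkm : Measurable k) {F : Set (Fin n → ℝ)} (hF : MeasurableSet F)
    (H : Fin n → ℝ) (K : ℝ)
    (hK : ∀ x ∈ F, Real.exp (-K) * ∏ i, k (x i) ≤ ∏ i, k (x i + H i)) :
    ENNReal.ofReal (Real.exp (-K)) * Measure.pi (fun _ : Fin n =>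
        volume.withDensity fun x => ENNReal.ofReal ((∫ y, k y)⁻¹ * k x)) F ≤
      Measure.pi (fun _ : Fin n =>
        volume.withDensity fun x => ENNReal.ofReal ((∫ y, k y)⁻¹ * k x))
        ((fun x => x + H) '' F) := by
  have hI : 0 ≤ (∫ y, k y)⁻¹ := inv_nonneg.2 (integral_nonneg hk0)
  refine ofReal_exp_mul_pi_le_pi_translate (fun x => mul_nonneg hI (hk0 x)) (hk.const_mul _)
    (hkm.const_mul _) hF H K fun x hx => ?_
  rw [Finset.prod_mul_distrib, Finset.prod_mul_distrib, mul_left_comm]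
  exact mul_le_mul_of_nonneg_left (hK x hx) (Finset.prod_nonneg fun _ _ => hI)

lemma abs_rpow_eq_sq_rpow (α y : ℝ) : |y| ^ α = (y ^ 2) ^ (α / 2) := by
  rw [← sq_abs, ← Real.rpow_natCast, ← Real.rpow_mul (abs_nonneg y)]
  congr 1; push_cast; ring

/-- The even part of `x ↦ |x + h| ^ α - |x| ^ α` is at most `|h| ^ α`. -/
lemma abs_add_rpow_add_abs_sub_rpow_le {α : ℝ} (hα0 : 0 < α) (hα2 : α ≤ 2) (x h : ℝ) :
    (|x + h| ^ α + |x - h| ^ α) / 2 ≤ |x| ^ α + |h| ^ α := by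
  have hconc := (Real.concaveOn_rpow (p := α / 2) (by linarith) (by linarith)).2
    (Set.mem_Ici.2 (sq_nonneg (x + h))) (Set.mem_Ici.2 (sq_nonneg (x - h)))
    (by norm_num : (0 : ℝ) ≤ 1 / 2) (by norm_num : (0 : ℝ) ≤ 1 / 2) (by norm_num)
  have hsub := Real.rpow_add_le_add_rpow (p := α / 2) (sq_nonneg x) (sq_nonneg h)
    (by linarith) (by linarith)
  simp only [smul_eq_mul] at hconc
  rw [show 1 / 2 * (x + h) ^ 2 + 1 / 2 * (x - h) ^ 2 = x ^ 2 + h ^ 2 by ring] at hconc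
  simp only [abs_rpow_eq_sq_rpow α]
  linarith

/-- The power `β ∈ [0, 1]` is `β`-Hölder on the nonnegative reals. -/
lemma abs_rpow_sub_rpow_le {β : ℝ} (hβ0 : 0 ≤ β) (hβ1 : β ≤ 1) {u w : ℝ} (hu : 0 ≤ u)
    (hw : 0 ≤ w) : |u ^ β - w ^ β| ≤ |u - w| ^ β := by
  wlog huw : w ≤ u generalizing u w
  · rw [abs_sub_comm, abs_sub_comm u w]
    exact this hw hu (le_of_not_ge huw)
  have hsub := Real.rpow_add_le_add_rpow hw (sub_nonneg.2 huw) hβ0 hβ1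
  rw [add_sub_cancel] at hsub
  rw [abs_of_nonneg (sub_nonneg.2 (Real.rpow_le_rpow hw huw hβ0)),
    abs_of_nonneg (sub_nonneg.2 huw)]
  linarith

/-- The odd part of `x ↦ |x + h| ^ α`. -/
def oddPart (α h x : ℝ) : ℝ := (|x + h| ^ α - |x - h| ^ α) / 2

lemma oddPart_neg (α h x : ℝ) : oddPart α h (-x) = -oddPart α h x := by
  have h1 : |-x + h| = |x - h| := by rw [← abs_neg]; congr 1; ring
  have h2 : |-x - h| = |x + h| := by rw [← abs_neg]; congr 1; ring
  rw [oddPart, oddPart, h1, h2]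
  ring

lemma measurable_oddPart (α h : ℝ) : Measurable (oddPart α h) := by
  unfold oddPart
  fun_prop

lemma oddPart_sq_le {α : ℝ} (hα0 : 0 < α) (hα2 : α ≤ 2) (h x : ℝ) :
    oddPart α h x ^ 2 ≤ 4 * (|x| ^ α * |h| ^ α) := by
  have hold := abs_rpow_sub_rpow_le (β := α / 2) (by linarith) (by linarith)
    (sq_nonneg (x + h)) (sq_nonneg (x - h))
  rw [← abs_rpow_eq_sq_rpow, ← abs_rpow_eq_sq_rpow,
    show (x + h) ^ 2 - (x - h) ^ 2 = 4 * (x * h) by ring] at hold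
  have hsq : (|4 * (x * h)| ^ (α / 2)) ^ 2 = 4 ^ α * (|x| ^ α * |h| ^ α) := by
    rw [← Real.rpow_natCast, ← Real.rpow_mul (abs_nonneg _),
      show α / 2 * ((2 : ℕ) : ℝ) = α by push_cast; ring, abs_mul, abs_mul,
      Real.mul_rpow (by positivity) (by positivity), Real.mul_rpow (by positivity) (by positivity)]
    norm_num
  have h4 : (4 : ℝ) ^ α ≤ 16 := by
    calc (4 : ℝ) ^ α ≤ 4 ^ (2 : ℝ) := Real.rpow_le_rpow_of_exponent_le (by norm_num) hα2
      _ = 16 := by norm_num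
  have hnn : 0 ≤ |x| ^ α * |h| ^ α := by positivity
  have h2 := pow_le_pow_left₀ (abs_nonneg _) hold 2
  rw [sq_abs, hsq] at h2
  have h3 := mul_le_mul_of_nonneg_right h4 hnn
  rw [oddPart, div_pow]
  linarith

lemma integrable_abs_rpow_mul_exp_neg {α s : ℝ} (hα0 : 0 < α) (hs : -1 < s) :
    Integrable fun x : ℝ => |x| ^ s * Real.exp (-|x| ^ α) := by
  have hIoi : IntegrableOn (fun x : ℝ => |x| ^ s * Real.exp (-|x| ^ α)) (Set.Ioi 0) := by
    refine (integrableOn_rpow_mul_exp_neg_rpow hs hα0).congr_fun (fun x hx => ?_) measurableSet_Ioi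
    simp only [abs_of_pos (Set.mem_Ioi.1 hx)]
  have hIic : IntegrableOn (fun x : ℝ => |x| ^ s * Real.exp (-|x| ^ α)) (Set.Iic 0) := by
    have hemb : MeasurableEmbedding fun x : ℝ => -x := (Homeomorph.neg ℝ).measurableEmbedding
    rw [← Measure.map_neg_eq_self (volume : Measure ℝ), hemb.integrableOn_map_iff]
    simpa [Function.comp_def] using (integrableOn_Ici_iff_integrableOn_Ioi enorm_ne_top).2 hIoi
  rw [← integrableOn_univ, ← Set.Iic_union_Ioi (a := (0 : ℝ))]
  exact hIic.union hIoi

lemma integrable_exp_neg_abs_rpow {α : ℝ} (hα0 : 0 < α) :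
    Integrable fun x : ℝ => Real.exp (-|x| ^ α) := by
  simpa using integrable_abs_rpow_mul_exp_neg hα0 (s := 0) (by norm_num)

lemma integral_exp_neg_abs_rpow_pos {α : ℝ} (hα0 : 0 < α) :
    0 < ∫ x : ℝ, Real.exp (-|x| ^ α) :=
  integral_exp_pos (integrable_exp_neg_abs_rpow hα0)

lemma nuAlpha_eq {α : ℝ} (hα0 : 0 < α) :
    nuAlpha α = volume.withDensity fun x =>
      ENNReal.ofReal ((∫ y : ℝ, Real.exp (-|y| ^ α))⁻¹ * Real.exp (-|x| ^ α)) :=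
  inv_smul_withDensity_ofReal (fun _ => (Real.exp_pos _).le) (integrable_exp_neg_abs_rpow hα0)
    (integral_exp_neg_abs_rpow_pos hα0)

lemma isProbabilityMeasure_nuAlpha {α : ℝ} (hα0 : 0 < α) : IsProbabilityMeasure (nuAlpha α) := by
  rw [nuAlpha_eq hα0]
  exact isProbabilityMeasure_withDensity_ofReal_normalized (fun _ => (Real.exp_pos _).le)
    (integrable_exp_neg_abs_rpow hα0) (integral_exp_neg_abs_rpow_pos hα0)

lemma integrable_abs_rpow_nuAlpha {α : ℝ} (hα0 : 0 < α) :
    Integrable (fun x => |x| ^ α) (nuAlpha α) := by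
  rw [nuAlpha_eq hα0, integrable_withDensity_iff (by fun_prop)
    (Eventually.of_forall fun _ => ENNReal.ofReal_lt_top)]
  refine ((integrable_abs_rpow_mul_exp_neg hα0 (s := α) (by linarith)).const_mul
    (∫ y : ℝ, Real.exp (-|y| ^ α))⁻¹).congr (Eventually.of_forall fun x => ?_)
  simp only
  rw [ENNReal.toReal_ofReal (mul_nonneg (inv_nonneg.2 (integral_exp_neg_abs_rpow_pos hα0).le)
    (Real.exp_pos _).le)]
  ring

lemma integral_oddPart_nuAlpha {α : ℝ} (hα0 : 0 < α) (h : ℝ) :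
    ∫ x, oddPart α h x ∂nuAlpha α = 0 := by
  rw [nuAlpha_eq hα0, integral_withDensity_eq_integral_toReal_smul (by fun_prop)
    (Eventually.of_forall fun _ => ENNReal.ofReal_lt_top)]
  refine self_eq_neg.1 ?_
  rw [← integral_neg, ← integral_neg_eq_self]
  refine integral_congr_ae (Eventually.of_forall fun x => ?_)
  simp [oddPart_neg]

lemma memLp_oddPart {α : ℝ} (hα0 : 0 < α) (hα2 : α ≤ 2) (h : ℝ) :
    MemLp (oddPart α h) 2 (nuAlpha α) := by
  rw [memLp_two_iff_integrable_sq (measurable_oddPart α h).aestronglyMeasurable]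
  refine (((integrable_abs_rpow_nuAlpha hα0).mul_const (|h| ^ α)).const_mul 4).mono'
    ((measurable_oddPart α h).pow_const 2).aestronglyMeasurable (Eventually.of_forall fun x => ?_)
  rw [Real.norm_of_nonneg (sq_nonneg _)]
  exact oddPart_sq_le hα0 hα2 h x

lemma variance_oddPart_le {α : ℝ} (hα0 : 0 < α) (hα2 : α ≤ 2) (h : ℝ) :
    ProbabilityTheory.variance (oddPart α h) (nuAlpha α) ≤
      4 * (∫ x, |x| ^ α ∂nuAlpha α) * |h| ^ α := by
  rw [ProbabilityTheory.variance_of_integral_eq_zero (measurable_oddPart α h).aemeasurable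
    (integral_oddPart_nuAlpha hα0 h), mul_assoc, ← integral_mul_const, ← integral_const_mul]
  exact integral_mono (memLp_oddPart hα0 hα2 h).integrable_sq
    (((integrable_abs_rpow_nuAlpha hα0).mul_const (|h| ^ α)).const_mul 4)
    fun x => oddPart_sq_le hα0 hα2 h x

/-- Chebyshev's inequality for the sum of the odd parts of the coordinate increments. -/
lemma nuPi_sum_oddPart_ge_le {α : ℝ} (hα0 : 0 < α) (hα2 : α ≤ 2) {n : ℕ} (H : Fin n → ℝ) {t : ℝ}
    (ht : 0 < t) :
    nuPi α n {x | t ≤ ∑ i, oddPart α (H i) (x i)} ≤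
      ENNReal.ofReal (4 * (∫ x, |x| ^ α ∂nuAlpha α) * lpNormPow α H / t ^ 2) := by
  have := isProbabilityMeasure_nuAlpha hα0
  have hLp : ∀ i, MemLp (fun x : Fin n → ℝ => oddPart α (H i) (x i)) 2 (nuPi α n) := fun i =>
    (memLp_oddPart hα0 hα2 (H i)).comp_measurePreserving
      (measurePreserving_eval (fun _ => nuAlpha α) i)
  have : IsProbabilityMeasure (nuPi α n) := by unfold nuPi; infer_instance
  have hmean : ∫ x, (∑ i, fun x : Fin n → ℝ => oddPart α (H i) (x i)) x ∂nuPi α n = 0 := by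
    simp only [Finset.sum_apply]
    rw [integral_finsetSum _ fun i _ => (hLp i).integrable (by norm_num)]
    refine Finset.sum_eq_zero fun i _ => ?_
    exact (integral_comp_eval (measurable_oddPart α (H i)).aestronglyMeasurable).trans
      (integral_oddPart_nuAlpha hα0 (H i))
  have hvar : ProbabilityTheory.variance (∑ i, fun x : Fin n → ℝ => oddPart α (H i) (x i))
      (nuPi α n) ≤ 4 * (∫ x, |x| ^ α ∂nuAlpha α) * lpNormPow α H := by
    rw [nuPi, ProbabilityTheory.variance_sum_pi fun i => memLp_oddPart hα0 hα2 (H i), lpNormPow,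
      Finset.mul_sum]
    exact Finset.sum_le_sum fun i _ => variance_oddPart_le hα0 hα2 (H i)
  have hcheb := ProbabilityTheory.meas_ge_le_variance_div_sq
    (memLp_finsetSum' Finset.univ fun i _ => hLp i) ht
  rw [hmean] at hcheb
  refine (measure_mono fun x hx => ?_).trans
    (hcheb.trans (ENNReal.ofReal_le_ofReal (by gcongr)))
  have hx' : t ≤ ∑ i, oddPart α (H i) (x i) := hx
  simpa using hx'.trans (le_abs_self _)

/-- Quantitative translation bound for `ν_α^n`. -/
lemma nuPi_translate_ge {α : ℝ} (hα0 : 0 < α) (hα2 : α ≤ 2) {n : ℕ} {E : Set (Fin n → ℝ)}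
    (hE : MeasurableSet E) (H : Fin n → ℝ) {c : ℝ} (hc : 0 < c)
    (hcE : ENNReal.ofReal c ≤ nuPi α n E) :
    ENNReal.ofReal (c / 2 * Real.exp (-1) * Real.exp (-(lpNormPow α H +
        √(8 * (∫ x, |x| ^ α ∂nuAlpha α) / c) * √(lpNormPow α H)))) ≤
      nuPi α n ((fun x => x + H) '' E) := by
  set M := ∫ x, |x| ^ α ∂nuAlpha α with hM
  set S := lpNormPow α H with hS
  have hM0 : 0 ≤ M := integral_nonneg fun x => by positivity
  have hS0 : 0 ≤ S := Finset.sum_nonneg fun i _ => by positivity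
  set t := √(8 * M / c) * √S + 1 with ht
  have ht0 : 0 < t := by positivity
  have htsq : 8 * M / c * S ≤ t ^ 2 := by
    have h0 : 0 ≤ √(8 * M / c) * √S := by positivity
    have h1 : (√(8 * M / c) * √S) ^ 2 = 8 * M / c * S := by
      rw [mul_pow, Real.sq_sqrt (by positivity), Real.sq_sqrt hS0]
    nlinarith
  have hbad : nuPi α n {x | t ≤ ∑ i, oddPart α (H i) (x i)} ≤ ENNReal.ofReal (c / 2) := by
    refine (nuPi_sum_oddPart_ge_le hα0 hα2 H ht0).trans (ENNReal.ofReal_le_ofReal ?_)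
    rw [← hM, ← hS, div_le_iff₀ (by positivity)]
    calc 4 * M * S = c / 2 * (8 * M / c * S) := by field_simp; ring
      _ ≤ c / 2 * t ^ 2 := by gcongr
  have hmeas : Measurable fun x : Fin n → ℝ => ∑ i, oddPart α (H i) (x i) :=
    Finset.measurable_sum _ fun i _ => (measurable_oddPart α (H i)).comp (measurable_pi_apply i)
  set F := E ∩ {x | ∑ i, oddPart α (H i) (x i) < t} with hF
  have hFm : MeasurableSet F := hE.inter (measurableSet_lt hmeas measurable_const)
  have hFc : ENNReal.ofReal (c / 2) ≤ nuPi α n F := by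
    have hcover : E ⊆ F ∪ {x | t ≤ ∑ i, oddPart α (H i) (x i)} := fun x hx => by
      rcases lt_or_ge (∑ i, oddPart α (H i) (x i)) t with h | h
      · exact Or.inl ⟨hx, h⟩
      · exact Or.inr h
    have hsum : ENNReal.ofReal (c / 2) + ENNReal.ofReal (c / 2) ≤
        nuPi α n F + ENNReal.ofReal (c / 2) := by
      rw [← ENNReal.ofReal_add (by positivity) (by positivity), add_halves]
      exact hcE.trans ((measure_mono hcover).trans ((measure_union_le _ _).trans (by gcongr)))
    exact (ENNReal.add_le_add_iff_right ENNReal.ofReal_ne_top).1 hsum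
  have hdens : ∀ x ∈ F, Real.exp (-(S + t)) * ∏ i, Real.exp (-|x i| ^ α) ≤
      ∏ i, Real.exp (-|x i + H i| ^ α) := fun x hx => by
    rw [← Real.exp_sum, ← Real.exp_sum, ← Real.exp_add, Real.exp_le_exp, Finset.sum_neg_distrib,
      Finset.sum_neg_distrib]
    have hpt : ∑ i, |x i + H i| ^ α ≤ ∑ i, (|x i| ^ α + |H i| ^ α + oddPart α (H i) (x i)) :=
      Finset.sum_le_sum fun i _ => by
        have := abs_add_rpow_add_abs_sub_rpow_le hα0 hα2 (x i) (H i)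
        rw [oddPart]
        linarith
    rw [Finset.sum_add_distrib, Finset.sum_add_distrib] at hpt
    have hxt : ∑ i, oddPart α (H i) (x i) < t := hx.2
    have hSe : S = ∑ i, |H i| ^ α := rfl
    linarith
  have htrans := ofReal_exp_mul_pi_normalized_le (fun _ => (Real.exp_pos _).le)
    (integrable_exp_neg_abs_rpow hα0) (by fun_prop) hFm H (S + t) hdens
  rw [← nuAlpha_eq hα0] at htrans
  calc _ = ENNReal.ofReal (Real.exp (-(S + t))) * ENNReal.ofReal (c / 2) := by
        rw [← ENNReal.ofReal_mul (Real.exp_nonneg _), mul_assoc, ← Real.exp_add, mul_comm]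
        congr 3
        rw [ht]
        ring
    _ ≤ ENNReal.ofReal (Real.exp (-(S + t))) * nuPi α n F := by gcongr
    _ ≤ nuPi α n ((fun x => x + H) '' F) := htrans
    _ ≤ _ := measure_mono (Set.image_mono Set.inter_subset_left)

lemma integrable_ite_exp_neg_rpow {α : ℝ} (hα0 : 0 < α) :
    Integrable fun x : ℝ => if 0 ≤ x then Real.exp (-x ^ α) else 0 := by
  refine ((integrable_exp_neg_abs_rpow hα0).indicator (measurableSet_Ici (a := 0))).congr
    (Eventually.of_forall fun x => ?_)
  by_cases hx : 0 ≤ x <;> simp [hx, abs_of_nonneg]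

lemma integral_ite_exp_neg_rpow_pos {α : ℝ} (hα0 : 0 < α) :
    0 < ∫ x : ℝ, if 0 ≤ x then Real.exp (-x ^ α) else 0 := by
  have hind : (fun x : ℝ => if 0 ≤ x then Real.exp (-x ^ α) else 0) =
      (Set.Ici 0).indicator fun x => Real.exp (-x ^ α) := by
    ext x
    simp [Set.indicator_apply]
  rw [hind, integral_indicator measurableSet_Ici, integral_Ici_eq_integral_Ioi,
    integral_exp_neg_rpow hα0]
  exact Real.Gamma_pos_of_pos (by positivity)

lemma ite_exp_neg_rpow_nonneg (α x : ℝ) : 0 ≤ if 0 ≤ x then Real.exp (-x ^ α) else 0 := by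
  split_ifs <;> positivity

lemma muAlpha_eq {α : ℝ} (hα0 : 0 < α) :
    muAlpha α = volume.withDensity fun x =>
      ENNReal.ofReal ((∫ y : ℝ, if 0 ≤ y then Real.exp (-y ^ α) else 0)⁻¹ *
        if 0 ≤ x then Real.exp (-x ^ α) else 0) := by
  rw [← inv_smul_withDensity_ofReal (ite_exp_neg_rpow_nonneg α) (integrable_ite_exp_neg_rpow hα0)
    (integral_ite_exp_neg_rpow_pos hα0)]
  have hker : muKernel α = volume.withDensity fun x =>
      ENNReal.ofReal (if 0 ≤ x then Real.exp (-x ^ α) else 0) := by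
    rw [muKernel]
    congr 1
    ext x
    split_ifs <;> simp
  rw [muAlpha, hker]

lemma isProbabilityMeasure_muAlpha {α : ℝ} (hα0 : 0 < α) : IsProbabilityMeasure (muAlpha α) := by
  rw [muAlpha_eq hα0]
  exact isProbabilityMeasure_withDensity_ofReal_normalized (ite_exp_neg_rpow_nonneg α)
    (integrable_ite_exp_neg_rpow hα0) (integral_ite_exp_neg_rpow_pos hα0)

/-- Quantitative translation bound for `μ_α^n`. -/
lemma muPi_translate_ge {α : ℝ} (hα0 : 0 < α) (hα1 : α ≤ 1) {n : ℕ} {E : Set (Fin n → ℝ)}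
    (hE : MeasurableSet E) {H : Fin n → ℝ} (hH : ∀ i, 0 ≤ H i) :
    ENNReal.ofReal (Real.exp (-lpNormPow α H)) * muPi α n E ≤
      muPi α n ((fun x => x + H) '' E) := by
  have htrans := ofReal_exp_mul_pi_normalized_le (ite_exp_neg_rpow_nonneg α)
    (integrable_ite_exp_neg_rpow hα0)
    (Measurable.ite measurableSet_Ici (by fun_prop) measurable_const) hE H (lpNormPow α H)
    fun x _ => by
      rw [lpNormPow, ← Finset.sum_neg_distrib, Real.exp_sum, ← Finset.prod_mul_distrib]
      refine Finset.prod_le_prod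
        (fun i _ => mul_nonneg (Real.exp_pos _).le (ite_exp_neg_rpow_nonneg α _)) fun i _ => ?_
      by_cases hx : 0 ≤ x i
      · rw [if_pos hx, if_pos (add_nonneg hx (hH i)), ← Real.exp_add, Real.exp_le_exp,
          abs_of_nonneg (hH i)]
        linarith [Real.rpow_add_le_add_rpow hx (hH i) hα0.le hα1]
      · rw [if_neg hx, mul_zero]
        exact ite_exp_neg_rpow_nonneg α _
  rwa [← muAlpha_eq hα0] at htrans

lemma lpNormPow_rpow_smul {α : ℝ} (hα0 : 0 < α) {w : ℝ} (hw : 0 ≤ w) {n : ℕ} (h : Fin n → ℝ) :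
    lpNormPow α (w ^ (1 / α) • h) = w * lpNormPow α h := by
  rw [lpNormPow, lpNormPow, Finset.mul_sum]
  refine Finset.sum_congr rfl fun i _ => ?_
  rw [Pi.smul_apply, smul_eq_mul, abs_mul, abs_of_nonneg (by positivity),
    Real.mul_rpow (by positivity) (abs_nonneg _), ← Real.rpow_mul hw, one_div_mul_cancel hα0.ne',
    Real.rpow_one]

/-- Asymptotic lower bound at speed `v`: multiplicative constants and corrections of order
`√v` in the exponent are negligible. -/
lemma neg_limsup_le_liminf_inv_mul_elog {v L : ℕ → ℝ} (hv : Tendsto v atTop atTop)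
    {p : ℕ → ENNReal} (hp : ∀ n, p n ≠ ⊤) {c A : ℝ} (hc : 0 < c) (hA : 0 ≤ A)
    (hbound : ∀ᶠ n in atTop,
      ENNReal.ofReal (c * Real.exp (-(v n * L n + A * √(v n * L n)))) ≤ p n) :
    -(limsup (fun n => ((L n : ℝ) : EReal)) atTop) ≤
      liminf (fun n => ((v n)⁻¹ : ℝ) * elog (p n)) atTop := by
  refine le_of_forall_lt fun a ha => ?_
  obtain ⟨b, hab, hb⟩ := EReal.lt_iff_exists_real_btwn.1 ha
  obtain ⟨b', hab', hb'⟩ := EReal.lt_iff_exists_real_btwn.1 hab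
  refine hab'.trans_le (le_liminf_of_le (by isBoundedDefault) ?_)
  have hLb : ∀ᶠ n in atTop, L n < -b := by
    have hlim : limsup (fun n => ((L n : ℝ) : EReal)) atTop < ((-b : ℝ) : EReal) := by
      rw [EReal.coe_neg]
      exact EReal.lt_neg_comm.1 hb
    filter_upwards [eventually_lt_of_limsup_lt hlim] with n hn
    exact EReal.coe_lt_coe_iff.1 hn
  have hsmall : Tendsto (fun n => (v n)⁻¹ * Real.log c + b - A * √(-b) * (√(v n))⁻¹) atTop
      (𝓝 (0 * Real.log c + b - A * √(-b) * 0)) :=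
    ((hv.inv_tendsto_atTop.mul_const _).add_const _).sub
      ((Real.tendsto_sqrt_atTop.comp hv).inv_tendsto_atTop.const_mul _)
  have hlt : b' < 0 * Real.log c + b - A * √(-b) * 0 := by
    simpa using EReal.coe_lt_coe_iff.1 hb'
  filter_upwards [hbound, hLb, hsmall.eventually_const_lt hlt, hv.eventually_gt_atTop 0]
    with n hn hLn hsn hvn
  have hexp : 0 < c * Real.exp (-(v n * L n + A * √(v n * L n))) := by positivity
  have hp0 : p n ≠ 0 := fun h0 => by
    rw [h0] at hn
    exact (ENNReal.ofReal_pos.2 hexp).not_ge hn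
  rw [elog, if_neg hp0, if_neg (hp n), ← EReal.coe_mul, EReal.coe_le_coe_iff]
  have hlog : Real.log c - (v n * L n + A * √(v n * L n)) ≤ Real.log (p n).toReal := by
    rw [sub_eq_add_neg, ← Real.log_exp (-(v n * L n + A * √(v n * L n))),
      ← Real.log_mul hc.ne' (Real.exp_ne_zero _)]
    exact Real.log_le_log hexp ((ENNReal.ofReal_le_iff_le_toReal (hp n)).1 hn)
  have hexpo : v n * L n + A * √(v n * L n) ≤ v n * -b + A * (√(v n) * √(-b)) := by
    rw [← Real.sqrt_mul hvn.le]
    gcongr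
  have hsq : (v n)⁻¹ * √(v n) = (√(v n))⁻¹ := by
    nth_rewrite 1 [← Real.mul_self_sqrt hvn.le]
    have := Real.sqrt_pos.2 hvn
    field_simp
  calc b' ≤ (v n)⁻¹ * Real.log c + b - A * √(-b) * (√(v n))⁻¹ := hsn.le
    _ = (v n)⁻¹ * (Real.log c - (v n * -b + A * (√(v n) * √(-b)))) := by
      rw [← hsq]
      field_simp
      ring
    _ ≤ (v n)⁻¹ * Real.log (p n).toReal := by
      gcongr
      linarith

/-- A positive lower limit of measures gives an eventual positive lower bound. -/
lemma exists_pos_eventually_ofReal_le {p : ℕ → ENNReal}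
    (hp : 0 < liminf (fun n => (p n).toReal) atTop) :
    ∃ c : ℝ, 0 < c ∧ ∀ᶠ n in atTop, ENNReal.ofReal c ≤ p n := by
  obtain ⟨c, hc0, hc⟩ := exists_between hp
  refine ⟨c, hc0, ?_⟩
  filter_upwards [eventually_lt_of_lt_liminf hc
    (isBoundedUnder_of ⟨0, fun n => ENNReal.toReal_nonneg⟩)] with n hn
  exact ENNReal.ofReal_le_of_le_toReal hn.le

/-- Proposition (lower bound on the probability of translated events). -/
theorem lower_bound_translates
    (α : ℝ) (hα0 : 0 < α)
    (v : ℕ → ℝ) (hv : Tendsto v atTop atTop)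
    (E : (n : ℕ) → Set (Fin n → ℝ)) (hE : ∀ n, MeasurableSet (E n))
    (h : (n : ℕ) → (Fin n → ℝ)) :
    -- (i) the symmetric case `ν_α`, `α ∈ (0,2]`
    (α ≤ 2 →
      0 < Filter.liminf (fun n => (nuPi α n (E n)).toReal) atTop →
      -(Filter.limsup (fun n => ((lpNormPow α (h n) : ℝ) : EReal)) atTop) ≤
        Filter.liminf
          (fun n => ((v n)⁻¹ : ℝ) *
            elog (nuPi α n ((fun x => x + (v n) ^ (1/α) • h n) '' E n)))
          atTop) ∧
    -- (ii) the one-sided case `μ_α`, `α ∈ (0,1]`, nonnegative translations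
    (α ≤ 1 → (∀ n i, 0 ≤ h n i) →
      0 < Filter.liminf (fun n => (muPi α n (E n)).toReal) atTop →
      -(Filter.limsup (fun n => ((lpNormPow α (h n) : ℝ) : EReal)) atTop) ≤
        Filter.liminf
          (fun n => ((v n)⁻¹ : ℝ) *
            elog (muPi α n ((fun x => x + (v n) ^ (1/α) • h n) '' E n)))
          atTop) := by
  refine ⟨fun hα2 hpos => ?_, fun hα1 hh hpos => ?_⟩
  · have := isProbabilityMeasure_nuAlpha hα0
    obtain ⟨c, hc0, hc⟩ := exists_pos_eventually_ofReal_le hpos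
    refine neg_limsup_le_liminf_inv_mul_elog hv
      (fun n => by unfold nuPi; exact measure_ne_top _ _) (c := c / 2 * Real.exp (-1))
      (A := √(8 * (∫ x, |x| ^ α ∂nuAlpha α) / c)) (by positivity) (by positivity) ?_
    filter_upwards [hc, hv.eventually_ge_atTop 0] with n hn hvn
    rw [← lpNormPow_rpow_smul hα0 hvn]
    exact nuPi_translate_ge hα0 hα2 (hE n) _ hc0 hn
  · have := isProbabilityMeasure_muAlpha hα0
    obtain ⟨c, hc0, hc⟩ := exists_pos_eventually_ofReal_le hpos
    refine neg_limsup_le_liminf_inv_mul_elog hv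
      (fun n => by unfold muPi; exact measure_ne_top _ _) hc0 le_rfl ?_
    filter_upwards [hc, hv.eventually_ge_atTop 0] with n hn hvn
    rw [zero_mul, add_zero, ← lpNormPow_rpow_smul hα0 hvn, mul_comm,
      ENNReal.ofReal_mul (Real.exp_nonneg _)]
    refine (mul_le_mul_right hn _).trans (muPi_translate_ge hα0 hα1 (hE n) fun i => ?_)
    exact mul_nonneg (by positivity) (hh n i)

end
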